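/- arXiv:2006.09969 — 2 statements merged into one kernel-verified Lean document; each statement's English description precedes it below -/
import Mathlib

section
/- Let α ∈ (0,1) with αℓ ∈ ℕ and αℓ ≥ 1, and let ℓ ≥ 1 and n ≥ 2ℓ be integers. Given F : V(J_{n,ℓ,α}) → [0,1], define G : [n]^ℓ → [0,1] by G(x₁,…,x_ℓ) = F({x₁,…,x_ℓ}) if the coordinates x₁,…,x_ℓ are pairwise distinct, and G(x) = 0 otherwise. Then ⟨G, L_C G⟩_{π_C} ≤ ⟨F, L_J F⟩_π + ((2ℓ² + ℓ)/(2n))·E_π[F], where π_C is uniform on [n]^ℓ, ⟨G, L_C G⟩_{π_C} = E_{x∼π_C}[G(x)²] − E_{x∼π_C}[G(x)·(A_C G)(x)] with A_C the Johnson-approximating graph operator, π is uniform on the vertices of J_{n,ℓ,α}, and ⟨F, L_J F⟩_π = (1/2)·E_{(U,V)∼E(J)}[(F(U) − F(V))²] over a uniformly random ordered edge of J_{n,ℓ,α}. -/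
open Finset

/-- The Johnson-approximating graph operator on `(ℤ/nℤ)^ℓ` with noise weight `k = αℓ`. -/
noncomputable def ugACop (n ℓ k : ℕ) [NeZero n] (f : (Fin ℓ → ZMod n) → ℝ)
    (x : Fin ℓ → ZMod n) : ℝ :=
  (∑ B ∈ univ.filter (fun B : Finset (Fin ℓ) => B.card = k),
      ∑ y : Fin ℓ → ZMod n, f (fun j => x j + if j ∈ B then y j else 0))
    / ((Nat.choose ℓ k : ℝ) * (n : ℝ) ^ ℓ)

/-- The (ordered) edge set of the Johnson graph `J_{n,ℓ,α}` (ground set `ℤ/nℤ`), `k = αℓ`. -/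
def ugJEdges (n ℓ k : ℕ) [NeZero n] : Finset (Finset (ZMod n) × Finset (ZMod n)) :=
  univ.filter (fun p => p.1.card = ℓ ∧ p.2.card = ℓ ∧ (p.1 ∩ p.2).card = ℓ - k)

/-- The Johnson Laplacian quadratic form `⟨F, L_J F⟩_π = (1/2)·E_{(U,V)}[(F U − F V)²]`. -/
noncomputable def ugJLap (n ℓ k : ℕ) [NeZero n] (F : Finset (ZMod n) → ℝ) : ℝ :=
  (1 / 2) * ((∑ p ∈ ugJEdges n ℓ k, (F p.1 - F p.2) ^ 2) / ((ugJEdges n ℓ k).card : ℝ))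

/-- The average `E_π[F]` of `F` over the ℓ-element subsets of the ground set. -/
noncomputable def ugJAvg (n ℓ : ℕ) [NeZero n] (F : Finset (ZMod n) → ℝ) : ℝ :=
  (∑ S ∈ univ.filter (fun S : Finset (ZMod n) => S.card = ℓ), F S) / (Nat.choose n ℓ : ℝ)

section UGHelpers

variable {X : Type*} [Fintype X] [DecidableEq X]

/-- A permutation carrying one pair of sets to another pair with the same cardinalities. -/
lemma ug_exists_perm (U V U' V' : Finset X) (h1 : U.card = U'.card) (h2 : V.card = V'.card)
    (h3 : (U ∩ V).card = (U' ∩ V').card) :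
    ∃ τ : Equiv.Perm X, U.image τ = U' ∧ V.image τ = V' := by
  have key : ∀ c : Bool × Bool,
      Nonempty ({x // (decide (x ∈ U), decide (x ∈ V)) = c} ≃
        {x // (decide (x ∈ U'), decide (x ∈ V')) = c}) := by
    intro c
    refine ⟨Fintype.equivOfCardEq ?_⟩
    rw [Fintype.card_subtype, Fintype.card_subtype]
    have a1 := card_sdiff_add_card_inter U V
    have a2 := card_sdiff_add_card_inter U' V'
    have b1 := card_sdiff_add_card_inter V U
    have b2 := card_sdiff_add_card_inter V' U'
    rw [inter_comm V U] at b1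
    rw [inter_comm V' U'] at b2
    have c1 := card_compl_add_card (U ∪ V)
    have c2 := card_compl_add_card (U' ∪ V')
    have d1 := card_union_add_card_inter U V
    have d2 := card_union_add_card_inter U' V'
    obtain ⟨c, d⟩ := c
    have e : ∀ P Q : Finset X, (univ.filter fun x => (decide (x ∈ P), decide (x ∈ Q)) = (c, d)) =
        if c then (if d then P ∩ Q else P \ Q) else (if d then Q \ P else (P ∪ Q)ᶜ) := by
      intro P Q
      ext x
      cases c <;> cases d <;> simp [and_comm]
    rw [e, e]
    cases c <;> cases d <;> simp only [if_true, if_false, Bool.false_eq_true] <;> omega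
  let e := fun c => Classical.choice (key c)
  let τ := Equiv.ofFiberEquiv e
  have hτ : ∀ x, (decide (τ x ∈ U'), decide (τ x ∈ V')) = (decide (x ∈ U), decide (x ∈ V)) :=
    fun x => Equiv.ofFiberEquiv_map e x
  have hU : ∀ x, τ x ∈ U' ↔ x ∈ U := by
    intro x
    have := hτ x
    simp only [Prod.mk.injEq, decide_eq_decide] at this
    exact this.1
  have hV : ∀ x, τ x ∈ V' ↔ x ∈ V := by
    intro x
    have := hτ x
    simp only [Prod.mk.injEq, decide_eq_decide] at this
    exact this.2
  refine ⟨τ, ?_, ?_⟩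
  · ext y
    obtain ⟨x, rfl⟩ := τ.surjective y
    simp [hU]
  · ext y
    obtain ⟨x, rfl⟩ := τ.surjective y
    simp [hV]

/-- Correlation of `F` on the orbit of a pair. -/
noncomputable def ugE (F : Finset X → ℝ) (U V : Finset X) : ℝ :=
  (∑ σ : Equiv.Perm X, F (U.image σ) * F (V.image σ)) / (Fintype.card (Equiv.Perm X) : ℝ)

lemma ug_perm_pos : (0 : ℝ) < (Fintype.card (Equiv.Perm X) : ℝ) := by
  exact_mod_cast Fintype.card_pos

lemma ugE_perm (F : Finset X → ℝ) (U V : Finset X) (τ : Equiv.Perm X) :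
    ugE F (U.image τ) (V.image τ) = ugE F U V := by
  unfold ugE
  congr 1
  refine Fintype.sum_equiv (Equiv.mulRight τ) _ _ ?_
  intro σ
  simp [image_image, Equiv.Perm.coe_mul]

lemma ugE_congr (F : Finset X → ℝ) (U V U' V' : Finset X) (h1 : U.card = U'.card)
    (h2 : V.card = V'.card) (h3 : (U ∩ V).card = (U' ∩ V').card) :
    ugE F U V = ugE F U' V' := by
  obtain ⟨τ, rfl, rfl⟩ := ug_exists_perm U V U' V' h1 h2 h3
  rw [ugE_perm]

lemma ugE_self_congr (F : Finset X → ℝ) (U V : Finset X) (h1 : U.card = V.card) :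
    ugE F U U = ugE F V V :=
  ugE_congr F _ _ _ _ h1 h1 (by simpa using h1)

lemma ugE_comm (F : Finset X → ℝ) (U V : Finset X) : ugE F U V = ugE F V U := by
  unfold ugE
  simp only [mul_comm]

lemma ugE_nonneg (F : Finset X → ℝ) (ℓ : ℕ) (hF : ∀ S : Finset X, S.card = ℓ → 0 ≤ F S ∧ F S ≤ 1)
    (U V : Finset X) (hU : U.card = ℓ) (hV : V.card = ℓ) : 0 ≤ ugE F U V := by
  refine div_nonneg (sum_nonneg fun σ _ => mul_nonneg ?_ ?_) ug_perm_pos.le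
  · exact (hF _ (by rw [card_image_of_injective _ σ.injective, hU])).1
  · exact (hF _ (by rw [card_image_of_injective _ σ.injective, hV])).1

/-- The energy identity on an orbit. -/
lemma ugE_sq (F : Finset X → ℝ) (U V : Finset X) :
    (∑ σ : Equiv.Perm X, (F (U.image σ) - F (V.image σ)) ^ 2) / (Fintype.card (Equiv.Perm X) : ℝ)
      = ugE F U U + ugE F V V - 2 * ugE F U V := by
  unfold ugE
  rw [← add_div, mul_div_assoc', ← sub_div, mul_sum, ← sum_add_distrib, ← sum_sub_distrib]
  congr 1
  refine sum_congr rfl fun σ _ => by ring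

lemma ugE_le (F : Finset X → ℝ) (U V : Finset X) (h : U.card = V.card) :
    ugE F U V ≤ ugE F U U := by
  have h1 := ugE_sq F U V
  have h2 : 0 ≤ (∑ σ : Equiv.Perm X, (F (U.image σ) - F (V.image σ)) ^ 2) /
      (Fintype.card (Equiv.Perm X) : ℝ) :=
    div_nonneg (sum_nonneg fun σ _ => sq_nonneg _) ug_perm_pos.le
  have h3 := ugE_self_congr F U V h
  linarith

lemma ugE_quad (F : Finset X → ℝ) (U V W Z : Finset X) :
    0 ≤ ugE F U U + ugE F V V + ugE F W W + ugE F Z Z + 2 * ugE F U V + 2 * ugE F W Z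
      - 2 * ugE F U W - 2 * ugE F U Z - 2 * ugE F V W - 2 * ugE F V Z := by
  have h2 : 0 ≤ (∑ σ : Equiv.Perm X, (F (U.image σ) + F (V.image σ) - F (W.image σ)
      - F (Z.image σ)) ^ 2) / (Fintype.card (Equiv.Perm X) : ℝ) :=
    div_nonneg (sum_nonneg fun σ _ => sq_nonneg _) ug_perm_pos.le
  refine h2.trans (le_of_eq ?_)
  unfold ugE
  simp only [mul_div_assoc', ← add_div, ← sub_div, mul_sum, ← sum_add_distrib, ← sum_sub_distrib]
  congr 1
  refine sum_congr rfl fun σ _ => by ring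

/-- The quadrilateral inequality between overlap levels. -/
lemma ugE_lower (F : Finset X → ℝ) (ℓ k : ℕ) (hk : k ≤ ℓ) (hn : ℓ + 3 * k ≤ Fintype.card X)
    (U V U0 V0 : Finset X) (hU : U.card = ℓ) (hV : V.card = ℓ) (hU0 : U0.card = ℓ)
    (hV0 : V0.card = ℓ) (h0 : (U0 ∩ V0).card = ℓ - k) (hUV : ℓ - k ≤ (U ∩ V).card) :
    2 * ugE F U0 V0 - ugE F U0 U0 ≤ ugE F U V := by
  obtain ⟨T, hT, hTc⟩ := exists_subset_card_eq hUV
  have hTU : T ⊆ U := hT.trans inter_subset_left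
  have hTV : T ⊆ V := hT.trans inter_subset_right
  have hTUV : T ⊆ U ∪ V := hTU.trans subset_union_left
  have hD : ((U ∪ V) \ T).card ≤ ((U ∪ V)ᶜ).card := by
    have c1 := card_compl_add_card (U ∪ V)
    have d1 := card_union_add_card_inter U V
    have e1 := card_sdiff_add_card_inter (U ∪ V) T
    rw [inter_eq_right.mpr hTUV] at e1
    omega
  obtain ⟨Y, hY, hYc⟩ := exists_subset_card_eq hD
  have hYd : ∀ y ∈ Y, y ∉ U ∧ y ∉ V := by
    intro y hy
    have := hY hy
    simpa using this
  obtain ⟨τ, hτ1, hτ2⟩ := ug_exists_perm ((U ∪ V) \ T) T Y T hYc.symm rfl (by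
    have h1 : ((U ∪ V) \ T) ∩ T = ∅ := by ext; simp
    have h2 : Y ∩ T = ∅ := by
      ext y
      simp only [mem_inter, notMem_empty, iff_false, not_and]
      intro hy hyT
      exact (hYd y hy).1 (hTU hyT)
    rw [h1, h2])
  have himg : ∀ P : Finset X, T ⊆ P → P ⊆ U ∪ V → ∀ Q : Finset X, T ⊆ Q → Q ⊆ U ∪ V →
      (Q ∩ P.image τ) = T := by
    intro P hTP hP Q hTQ hQ
    ext y
    constructor
    · intro hy
      obtain ⟨hyQ, hyP⟩ := mem_inter.1 hy
      obtain ⟨x, hx, rfl⟩ := mem_image.1 hyP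
      by_cases hxT : x ∈ T
      · rw [← hτ2]; exact mem_image_of_mem _ hxT
      · exfalso
        have : τ x ∈ Y := by
          rw [← hτ1]; exact mem_image_of_mem _ (mem_sdiff.2 ⟨hP hx, hxT⟩)
        have h2 := hYd _ this
        have h3 := hQ hyQ
        simp only [mem_union] at h3
        tauto
    · intro hy
      refine mem_inter.2 ⟨hTQ hy, ?_⟩
      rw [← hτ2] at hy
      exact image_subset_image hTP hy
  have ci : ∀ P : Finset X, (P.image τ).card = P.card :=
    fun P => card_image_of_injective _ τ.injective
  have q := ugE_quad F U V (U.image τ) (V.image τ)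
  rw [ugE_perm, ugE_perm, ugE_perm] at q
  have ub : ∀ P : Finset X, P.card = ℓ → ∀ Q : Finset X, Q.card = ℓ → T ⊆ P → P ⊆ U ∪ V →
      T ⊆ Q → Q ⊆ U ∪ V → ugE F Q (P.image τ) = ugE F U0 V0 := by
    intro P hPc Q hQc h1 h2 h3 h4
    refine ugE_congr F _ _ _ _ (by omega) (by rw [ci]; omega) ?_
    rw [himg P h1 h2 Q h3 h4, hTc, h0]
  rw [ub U hU U hU hTU subset_union_left hTU subset_union_left,
    ub V hV U hU hTV subset_union_right hTU subset_union_left,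
    ub U hU V hV hTU subset_union_left hTV subset_union_right,
    ub V hV V hV hTV subset_union_right hTV subset_union_right,
    ugE_self_congr F U U0 (by omega), ugE_self_congr F V U0 (by omega)] at q
  linarith

/-- Counting: one coordinate equation cuts the cube by a factor `|X|`. -/
lemma ug_count {ℓ : ℕ} (i : Fin ℓ) (g : (Fin ℓ → X) → X)
    (hg : ∀ y c, g (Function.update y i c) = g y) :
    (univ.filter fun y : Fin ℓ → X => y i = g y).card * Fintype.card X ≤ Fintype.card X ^ ℓ := by
  have : Fintype.card X ^ ℓ = (univ : Finset (Fin ℓ → X)).card := by simp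
  rw [this, ← card_univ (α := X), ← card_product]
  refine card_le_card_of_injOn (fun p => Function.update p.1 i p.2) (by intro _ _; simp) ?_
  rintro ⟨y, c⟩ h1 ⟨y', c'⟩ h2 h
  simp only [coe_product, Set.mem_prod, mem_coe, mem_univ, true_and, and_true,
    coe_filter, Set.mem_ofPred_eq] at h1 h2
  simp only at h
  have hc : c = c' := by
    have := congrFun h i
    simpa using this
  have hgg : g y = g y' := by rw [← hg y c, h, hg]
  have hy : y = y' := by
    ext j
    by_cases hj : j = i
    · subst hj; rw [h1, h2, hgg]
    · have := congrFun h j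
      simpa [hj] using this
  rw [hc, hy]

/-- The resampled vector. -/
def ugZ {ℓ : ℕ} (B : Finset (Fin ℓ)) (x y : Fin ℓ → X) : Fin ℓ → X :=
  fun j => if j ∈ B then y j else x j

lemma ug_count_inj {ℓ : ℕ} (B : Finset (Fin ℓ)) (x : Fin ℓ → X) (hx : Function.Injective x) :
    (univ.filter fun y : Fin ℓ → X => ¬ Function.Injective (ugZ B x y)).card * Fintype.card X
      ≤ B.card * ℓ * Fintype.card X ^ ℓ := by
  have hsub : (univ.filter fun y : Fin ℓ → X => ¬ Function.Injective (ugZ B x y)) ⊆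
      B.biUnion fun i => (univ.erase i).biUnion fun j => univ.filter fun y => y i = ugZ B x y j := by
    intro y hy
    simp only [mem_filter, mem_univ, true_and] at hy
    simp only [Function.Injective, not_forall] at hy
    obtain ⟨i, j, hij, hne⟩ := hy
    simp only [mem_biUnion, mem_erase, mem_univ, and_true, mem_filter, true_and]
    by_cases hi : i ∈ B
    · refine ⟨i, hi, j, fun h => hne h.symm, ?_⟩
      rw [← hij]; simp [ugZ, hi]
    · by_cases hj : j ∈ B
      · refine ⟨j, hj, i, hne, ?_⟩
        rw [hij]; simp [ugZ, hj]
      · exfalso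
        simp only [ugZ, hi, hj, if_false] at hij
        exact hne (hx hij)
  have h1 : ∀ i ∈ B, ((univ.erase i).biUnion fun j =>
      univ.filter fun y : Fin ℓ → X => y i = ugZ B x y j).card * Fintype.card X
        ≤ ℓ * Fintype.card X ^ ℓ := by
    intro i _
    calc _ ≤ (∑ j ∈ univ.erase i, (univ.filter fun y : Fin ℓ → X => y i = ugZ B x y j).card)
              * Fintype.card X := Nat.mul_le_mul_right _ card_biUnion_le
      _ = ∑ j ∈ univ.erase i, (univ.filter fun y : Fin ℓ → X => y i = ugZ B x y j).card
              * Fintype.card X := by rw [sum_mul]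
      _ ≤ ∑ j ∈ univ.erase i, Fintype.card X ^ ℓ := by
          refine sum_le_sum fun j hj => ug_count i (fun y => ugZ B x y j) ?_
          intro y c
          have : j ≠ i := (mem_erase.1 hj).1
          simp [ugZ, this]
      _ ≤ ∑ j : Fin ℓ, Fintype.card X ^ ℓ := sum_le_sum_of_subset (erase_subset _ _)
      _ = _ := by simp
  calc _ ≤ (∑ i ∈ B, ((univ.erase i).biUnion fun j =>
      univ.filter fun y : Fin ℓ → X => y i = ugZ B x y j).card) * Fintype.card X :=
        Nat.mul_le_mul_right _ ((card_le_card hsub).trans card_biUnion_le)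
    _ = ∑ i ∈ B, ((univ.erase i).biUnion fun j =>
      univ.filter fun y : Fin ℓ → X => y i = ugZ B x y j).card * Fintype.card X := by rw [sum_mul]
    _ ≤ ∑ i ∈ B, ℓ * Fintype.card X ^ ℓ := sum_le_sum h1
    _ = _ := by simp [mul_assoc]

lemma ug_count_hit {ℓ : ℕ} (B : Finset (Fin ℓ)) (x : Fin ℓ → X) :
    (univ.filter fun y : Fin ℓ → X => ∃ i ∈ B, ∃ j, y i = x j).card * Fintype.card X
      ≤ B.card * ℓ * Fintype.card X ^ ℓ := by
  have hsub : (univ.filter fun y : Fin ℓ → X => ∃ i ∈ B, ∃ j, y i = x j) ⊆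
      (B ×ˢ univ).biUnion fun p => univ.filter fun y => y p.1 = x p.2 := by
    intro y hy
    simp only [mem_filter, mem_univ, true_and] at hy
    obtain ⟨i, hi, j, hij⟩ := hy
    simp only [mem_biUnion, mem_product, mem_univ, and_true, mem_filter, true_and]
    exact ⟨(i, j), hi, hij⟩
  calc _ ≤ (∑ p ∈ B ×ˢ (univ : Finset (Fin ℓ)),
      (univ.filter fun y : Fin ℓ → X => y p.1 = x p.2).card) * Fintype.card X :=
        Nat.mul_le_mul_right _ ((card_le_card hsub).trans card_biUnion_le)
    _ = ∑ p ∈ B ×ˢ (univ : Finset (Fin ℓ)),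
      (univ.filter fun y : Fin ℓ → X => y p.1 = x p.2).card * Fintype.card X := by rw [sum_mul]
    _ ≤ ∑ p ∈ B ×ˢ (univ : Finset (Fin ℓ)), Fintype.card X ^ ℓ :=
        sum_le_sum fun p _ => ug_count p.1 (fun _ => x p.2) (fun _ _ => rfl)
    _ = _ := by simp [card_product]

/-- Intersection of the images of `x` and its resampling. -/
lemma ug_inter_ge {ℓ : ℕ} (B : Finset (Fin ℓ)) (x y : Fin ℓ → X) (hx : Function.Injective x) :
    ℓ - B.card ≤ (univ.image x ∩ univ.image (ugZ B x y)).card := by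
  have : (Bᶜ.image x) ⊆ univ.image x ∩ univ.image (ugZ B x y) := by
    intro z hz
    obtain ⟨j, hj, rfl⟩ := mem_image.1 hz
    have hj' : j ∉ B := by simpa using hj
    refine mem_inter.2 ⟨mem_image_of_mem _ (mem_univ _), mem_image.2 ⟨j, mem_univ _, ?_⟩⟩
    simp [ugZ, hj']
  have h := card_le_card this
  rw [card_image_of_injective _ hx, card_compl, Fintype.card_fin] at h
  exact h

lemma ug_inter_eq {ℓ : ℕ} (B : Finset (Fin ℓ)) (x y : Fin ℓ → X) (hx : Function.Injective x)
    (h : ¬ ∃ i ∈ B, ∃ j, y i = x j) :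
    (univ.image x ∩ univ.image (ugZ B x y)).card = ℓ - B.card := by
  refine le_antisymm ?_ (ug_inter_ge B x y hx)
  have : univ.image x ∩ univ.image (ugZ B x y) ⊆ (Bᶜ.image x) := by
    intro z hz
    obtain ⟨h1, h2⟩ := mem_inter.1 hz
    obtain ⟨i, _, rfl⟩ := mem_image.1 h1
    obtain ⟨j, _, hj⟩ := mem_image.1 h2
    by_cases hjB : j ∈ B
    · exfalso
      simp only [ugZ, hjB, if_true] at hj
      exact h ⟨j, hjB, i, hj⟩
    · simp only [ugZ, hjB, if_false] at hj
      rw [← hj]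
      exact mem_image_of_mem _ (by simpa using hjB)
  have h := card_le_card this
  rw [card_image_of_injective _ hx, card_compl, Fintype.card_fin] at h
  exact h


/-- The key per-vertex lower bound. -/
lemma ug_inner (F : Finset X → ℝ) (ℓ k : ℕ) (hk : k < ℓ) (hX : 0 < Fintype.card X)
    (hF : ∀ S : Finset X, S.card = ℓ → 0 ≤ F S ∧ F S ≤ 1)
    (U0 V0 : Finset X) (hU0 : U0.card = ℓ)
    (hV0 : V0.card = ℓ) (h0 : (U0 ∩ V0).card = ℓ - k)
    (C : ℝ) (hC : C = (2 * (ℓ : ℝ) ^ 2 + ℓ) / (2 * (Fintype.card X : ℝ)))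
    (B : Finset (Fin ℓ)) (hB : B.card = k) (x : Fin ℓ → X) (hx : Function.Injective x) :
    (Fintype.card X : ℝ) ^ ℓ * (ugE F U0 V0 - C * ugE F U0 U0) ≤
      ∑ y : Fin ℓ → X, if Function.Injective (ugZ B x y) then
        ugE F (univ.image x) (univ.image (ugZ B x y)) else 0 := by
  set a := ugE F U0 U0 with ha
  set b := ugE F U0 V0 with hb
  have hXr : (0 : ℝ) < (Fintype.card X : ℝ) := by exact_mod_cast hX
  have hN : (0 : ℝ) < (Fintype.card X : ℝ) ^ ℓ := by positivity
  have hab : b ≤ a := ugE_le F U0 V0 (by omega)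
  have hb0 : 0 ≤ b := ugE_nonneg F ℓ hF _ _ hU0 hV0
  have ci : ∀ z : Fin ℓ → X, Function.Injective z → (univ.image z).card = ℓ := by
    intro z hz
    rw [card_image_of_injective _ hz]; simp
  have hnn : ∀ y : Fin ℓ → X, 0 ≤ if Function.Injective (ugZ B x y) then
        ugE F (univ.image x) (univ.image (ugZ B x y)) else 0 := by
    intro y
    split_ifs with h
    · exact ugE_nonneg F ℓ hF _ _ (ci _ hx) (ci _ h)
    · exact le_rfl
  by_cases hC1 : 1 ≤ C
  · refine le_trans ?_ (sum_nonneg fun y _ => hnn y)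
    refine mul_nonpos_of_nonneg_of_nonpos hN.le ?_
    nlinarith
  push Not at hC1
  have hroom : ℓ + 3 * k ≤ Fintype.card X := by
    rw [hC, div_lt_one (by positivity)] at hC1
    have h1 : 2 * ℓ ^ 2 + ℓ < 2 * Fintype.card X := by exact_mod_cast hC1
    obtain ⟨m, rfl⟩ : ∃ m, ℓ = k + 1 + m := ⟨ℓ - (k + 1), by omega⟩
    rcases k with _ | _ | k
    · nlinarith
    · nlinarith
    · nlinarith
  have hkl : (k : ℝ) * ℓ ≤ C * Fintype.card X := by
    rw [hC, div_mul_eq_mul_div, le_div_iff₀ (by positivity)]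
    have h1 : (k : ℝ) ≤ ℓ := by exact_mod_cast hk.le
    have h2 : (0 : ℝ) ≤ ℓ := by positivity
    have h3 : (k : ℝ) * ℓ ≤ ℓ * ℓ := mul_le_mul_of_nonneg_right h1 h2
    nlinarith
  -- counts
  set N1 : ℝ := ((univ.filter fun y : Fin ℓ → X => ¬ Function.Injective (ugZ B x y)).card : ℝ)
    with hN1
  set N2 : ℝ := ((univ.filter fun y : Fin ℓ → X => ∃ i ∈ B, ∃ j, y i = x j).card : ℝ) with hN2
  have cnt : ∀ t : ℝ, t * Fintype.card X ≤ k * ℓ * (Fintype.card X : ℝ) ^ ℓ →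
      t ≤ C * (Fintype.card X : ℝ) ^ ℓ := by
    intro t ht
    have h1 : t * Fintype.card X ≤ C * (Fintype.card X : ℝ) ^ ℓ * Fintype.card X := by
      refine ht.trans ?_
      have := mul_le_mul_of_nonneg_right hkl hN.le
      linarith
    exact le_of_mul_le_mul_right h1 hXr
  have c1 : N1 ≤ C * (Fintype.card X : ℝ) ^ ℓ := by
    refine cnt _ ?_
    have := ug_count_inj B x hx
    rw [hB] at this
    rw [hN1]
    exact_mod_cast this
  have c2 : N2 ≤ C * (Fintype.card X : ℝ) ^ ℓ := by
    refine cnt _ ?_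
    have := ug_count_hit B x
    rw [hB] at this
    rw [hN2]
    exact_mod_cast this
  have cu : (∑ y : Fin ℓ → X, (1 : ℝ)) = (Fintype.card X : ℝ) ^ ℓ := by simp
  have s1 : (∑ y : Fin ℓ → X, (if Function.Injective (ugZ B x y) then (0 : ℝ) else 1)) = N1 := by
    rw [hN1, card_filter]
    push_cast
    refine sum_congr rfl fun y _ => ?_
    split_ifs <;> simp_all
  have s2 : (∑ y : Fin ℓ → X, (if ∃ i ∈ B, ∃ j, y i = x j then (1 : ℝ) else 0)) = N2 := by
    rw [hN2, card_filter]
    push_cast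
    rfl
  have good : ∀ y : Fin ℓ → X, Function.Injective (ugZ B x y) → (¬ ∃ i ∈ B, ∃ j, y i = x j) →
      ugE F (univ.image x) (univ.image (ugZ B x y)) = b := by
    intro y hy hg
    refine ugE_congr F _ _ _ _ (by rw [ci _ hx, hU0]) (by rw [ci _ hy, hV0]) ?_
    rw [ug_inter_eq B x y hx hg, hB, h0]
  by_cases hcase : a ≤ 2 * b
  · have pt : ∀ y : Fin ℓ → X, b * 1 - b * (if Function.Injective (ugZ B x y) then (0 : ℝ) else 1)
        - (a - b) * (if ∃ i ∈ B, ∃ j, y i = x j then (1 : ℝ) else 0) ≤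
        if Function.Injective (ugZ B x y) then
          ugE F (univ.image x) (univ.image (ugZ B x y)) else 0 := by
      intro y
      by_cases hy : Function.Injective (ugZ B x y)
      · by_cases hg : ∃ i ∈ B, ∃ j, y i = x j
        · rw [if_pos hy, if_pos hg, if_pos hy]
          have := ugE_lower F ℓ k hk.le hroom (univ.image x) (univ.image (ugZ B x y)) U0 V0
            (ci _ hx) (ci _ hy) hU0 hV0 h0 (by rw [← hB]; exact ug_inter_ge B x y hx)
          linarith
        · rw [if_pos hy, if_neg hg, if_pos hy, good y hy hg]
          linarith
      · rw [if_neg hy, if_neg hy]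
        split_ifs <;> linarith
    refine le_trans ?_ (sum_le_sum fun y _ => pt y)
    rw [sum_sub_distrib, sum_sub_distrib, ← mul_sum, ← mul_sum, ← mul_sum, cu, s1, s2]
    nlinarith [mul_le_mul_of_nonneg_left c1 hb0,
      mul_le_mul_of_nonneg_left c2 (sub_nonneg.2 hab)]
  · push Not at hcase
    have pt : ∀ y : Fin ℓ → X, b * 1 - b * (if Function.Injective (ugZ B x y) then (0 : ℝ) else 1)
        - b * (if ∃ i ∈ B, ∃ j, y i = x j then (1 : ℝ) else 0) ≤
        if Function.Injective (ugZ B x y) then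
          ugE F (univ.image x) (univ.image (ugZ B x y)) else 0 := by
      intro y
      by_cases hy : Function.Injective (ugZ B x y)
      · by_cases hg : ∃ i ∈ B, ∃ j, y i = x j
        · have := hnn y
          rw [if_pos hy] at this
          rw [if_pos hy, if_pos hg, if_pos hy]
          linarith
        · rw [if_pos hy, if_neg hg, if_pos hy, good y hy hg]
          linarith
      · rw [if_neg hy, if_neg hy]
        split_ifs <;> linarith
    refine le_trans ?_ (sum_le_sum fun y _ => pt y)
    rw [sum_sub_distrib, sum_sub_distrib, ← mul_sum, ← mul_sum, ← mul_sum, cu, s1, s2]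
    have hC0 : 0 ≤ C * (Fintype.card X : ℝ) ^ ℓ := by
      rw [hC]; positivity
    nlinarith [mul_le_mul_of_nonneg_left c1 hb0,
      mul_le_mul_of_nonneg_left c2 hb0, mul_le_mul_of_nonneg_left hcase.le hC0]

/-- Averaging a constant family over permutations. -/
lemma ug_avg (S : ℝ) (f : Equiv.Perm X → ℝ) (h : ∀ σ, f σ = S) :
    S = (∑ σ, f σ) / (Fintype.card (Equiv.Perm X) : ℝ) := by
  have := ug_perm_pos (X := X)
  rw [sum_congr rfl fun σ _ => h σ, sum_const, card_univ, nsmul_eq_mul]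
  field_simp

/-- Symmetrization of the pair sum. -/
lemma ug_sym (F : Finset X → ℝ) (ℓ : ℕ) (G : (Fin ℓ → X) → ℝ)
    (hG : ∀ x : Fin ℓ → X, G x = if Function.Injective x then F (univ.image x) else 0)
    (B : Finset (Fin ℓ)) :
    ∑ x : Fin ℓ → X, ∑ y : Fin ℓ → X, G x * G (ugZ B x y) =
      ∑ x : Fin ℓ → X, if Function.Injective x then
        (∑ y : Fin ℓ → X, if Function.Injective (ugZ B x y) then
          ugE F (univ.image x) (univ.image (ugZ B x y)) else 0) else 0 := by
  have h1 : ∀ σ : Equiv.Perm X, ∑ x : Fin ℓ → X, ∑ y : Fin ℓ → X,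
      G (σ ∘ x) * G (σ ∘ ugZ B x y) = ∑ x : Fin ℓ → X, ∑ y : Fin ℓ → X, G x * G (ugZ B x y) := by
    intro σ
    refine Fintype.sum_equiv (Equiv.piCongrRight fun _ => σ) _ _ fun x => ?_
    refine Fintype.sum_equiv (Equiv.piCongrRight fun _ => σ) _ _ fun y => ?_
    congr 2
    funext j
    simp only [ugZ, Function.comp, Equiv.piCongrRight_apply, Pi.map_apply]
    split_ifs <;> rfl
  rw [ug_avg _ _ h1, sum_comm, sum_div]
  refine sum_congr rfl fun x _ => ?_
  rw [sum_comm, sum_div]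
  have gi : ∀ (σ : Equiv.Perm X) (z : Fin ℓ → X), G (σ ∘ z) =
      if Function.Injective z then F ((univ.image z).image σ) else 0 := by
    intro σ z
    rw [hG, image_image]
    simp only [σ.injective.of_comp_iff]
  by_cases hx : Function.Injective x
  · rw [if_pos hx]
    refine sum_congr rfl fun y _ => ?_
    by_cases hy : Function.Injective (ugZ B x y)
    · rw [if_pos hy]
      unfold ugE
      simp only [gi, if_pos hx, if_pos hy]
    · rw [if_neg hy]
      simp only [gi, if_neg hy, mul_zero, sum_const_zero, zero_div]
  · rw [if_neg hx]
    simp only [gi, if_neg hx, zero_mul, sum_const_zero, zero_div]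

end UGHelpers

lemma ug_lap_eq (n ℓ k : ℕ) [NeZero n] (F : Finset (ZMod n) → ℝ) (U0 V0 : Finset (ZMod n))
    (hU0 : U0.card = ℓ) (hV0 : V0.card = ℓ) (h0 : (U0 ∩ V0).card = ℓ - k) :
    ugJLap n ℓ k F = ugE F U0 U0 - ugE F U0 V0 := by
  have hne : (0 : ℝ) < ((ugJEdges n ℓ k).card : ℝ) := by
    have : (U0, V0) ∈ ugJEdges n ℓ k := by simp [ugJEdges, hU0, hV0, h0]
    exact_mod_cast card_pos.2 ⟨_, this⟩
  have h1 : ∀ σ : Equiv.Perm (ZMod n), ∑ p ∈ ugJEdges n ℓ k,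
      (F (p.1.image σ) - F (p.2.image σ)) ^ 2 = ∑ p ∈ ugJEdges n ℓ k, (F p.1 - F p.2) ^ 2 := by
    intro σ
    have ci : ∀ (τ : Equiv.Perm (ZMod n)) (P : Finset (ZMod n)), (P.image τ).card = P.card :=
      fun τ P => card_image_of_injective _ τ.injective
    have mem : ∀ (τ : Equiv.Perm (ZMod n)), ∀ p ∈ ugJEdges n ℓ k,
        (p.1.image τ, p.2.image τ) ∈ ugJEdges n ℓ k := by
      intro τ p hp
      simp only [ugJEdges, mem_filter, mem_univ, true_and] at hp ⊢
      rw [← image_inter _ _ τ.injective, ci, ci, ci]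
      exact hp
    refine sum_nbij' (fun p => (p.1.image σ, p.2.image σ))
      (fun p => (p.1.image σ.symm, p.2.image σ.symm)) (mem σ) (mem σ.symm) ?_ ?_ ?_
    · intro p _
      simp [image_image]
    · intro p _
      simp [image_image]
    · intro p _
      rfl
  have h2 : ∑ p ∈ ugJEdges n ℓ k, (F p.1 - F p.2) ^ 2 =
      ((ugJEdges n ℓ k).card : ℝ) * (2 * (ugE F U0 U0 - ugE F U0 V0)) := by
    rw [ug_avg _ _ h1, sum_comm, sum_div, ← nsmul_eq_mul, ← sum_const]
    refine sum_congr rfl fun p hp => ?_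
    simp only [ugJEdges, mem_filter, mem_univ, true_and] at hp
    rw [ugE_sq, ugE_self_congr F p.1 U0 (by omega), ugE_self_congr F p.2 U0 (by omega),
      ugE_congr F p.1 p.2 U0 V0 (by omega) (by omega) (by omega)]
    ring
  unfold ugJLap
  rw [h2]
  field_simp

lemma ug_avg_ge (n ℓ : ℕ) [NeZero n] (F : Finset (ZMod n) → ℝ)
    (hF : ∀ S : Finset (ZMod n), S.card = ℓ → 0 ≤ F S ∧ F S ≤ 1)
    (U0 : Finset (ZMod n)) (hU0 : U0.card = ℓ) :
    ugE F U0 U0 ≤ ugJAvg n ℓ F := by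
  have ci : ∀ (τ : Equiv.Perm (ZMod n)) (P : Finset (ZMod n)), (P.image τ).card = P.card :=
    fun τ P => card_image_of_injective _ τ.injective
  have hc : (univ.filter (fun S : Finset (ZMod n) => S.card = ℓ)).card = Nat.choose n ℓ := by
    have : (univ.filter (fun S : Finset (ZMod n) => S.card = ℓ)) = powersetCard ℓ univ := by
      ext S
      simp [mem_powersetCard]
    rw [this, card_powersetCard, card_univ, ZMod.card]
  have hpos : (0 : ℝ) < (Nat.choose n ℓ : ℝ) := by
    rw [← hc]
    exact_mod_cast card_pos.2 ⟨U0, by simp [hU0]⟩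
  have h1 : ∀ σ : Equiv.Perm (ZMod n),
      ∑ S ∈ univ.filter (fun S : Finset (ZMod n) => S.card = ℓ), F (S.image σ) ^ 2 =
      ∑ S ∈ univ.filter (fun S : Finset (ZMod n) => S.card = ℓ), F S ^ 2 := by
    intro σ
    refine sum_nbij' (fun p => p.image σ) (fun p => p.image σ.symm) ?_ ?_ ?_ ?_ ?_
    · intro p hp
      simpa [ci] using hp
    · intro p hp
      simpa [ci] using hp
    · intro p _
      simp [image_image]
    · intro p _
      simp [image_image]
    · intro p _
      rfl
  have h2 : ∑ S ∈ univ.filter (fun S : Finset (ZMod n) => S.card = ℓ), F S ^ 2 =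
      (Nat.choose n ℓ : ℝ) * ugE F U0 U0 := by
    rw [ug_avg _ _ h1, sum_comm, sum_div, ← hc, ← nsmul_eq_mul, ← sum_const]
    refine sum_congr rfl fun S hS => ?_
    simp only [mem_filter, mem_univ, true_and] at hS
    rw [← ugE_self_congr F S U0 (by omega)]
    unfold ugE
    simp only [sq]
  unfold ugJAvg
  rw [le_div_iff₀ hpos, mul_comm, ← h2]
  refine sum_le_sum fun S hS => ?_
  simp only [mem_filter, mem_univ, true_and] at hS
  obtain ⟨h3, h4⟩ := hF S hS
  nlinarith

/-- comparison of Laplacian quadratic forms between the Johnson graph and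
the Johnson-approximating graph, via the lift `G` of `F` to the cube. -/
theorem stmt15 (n ℓ k : ℕ) [NeZero n] (hℓ : 1 ≤ ℓ) (hn : 2 * ℓ ≤ n) (hk1 : 1 ≤ k)
    (α : ℝ) (hα0 : 0 < α) (hα1 : α < 1) (hk : (k : ℝ) = α * ℓ)
    (F : Finset (ZMod n) → ℝ)
    (hF : ∀ S : Finset (ZMod n), S.card = ℓ → 0 ≤ F S ∧ F S ≤ 1)
    (G : (Fin ℓ → ZMod n) → ℝ)
    (hG : ∀ x : Fin ℓ → ZMod n,
      G x = if Function.Injective x then F (Finset.image x univ) else 0) :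
    (∑ x : Fin ℓ → ZMod n, G x ^ 2) / (n : ℝ) ^ ℓ
        - (∑ x : Fin ℓ → ZMod n, G x * ugACop n ℓ k G x) / (n : ℝ) ^ ℓ
      ≤ ugJLap n ℓ k F + ((2 * (ℓ : ℝ) ^ 2 + ℓ) / (2 * n)) * ugJAvg n ℓ F := by
  have hkl : k < ℓ := by
    have h1 : (k : ℝ) < ℓ := by
      have h2 : (0 : ℝ) < ℓ := by exact_mod_cast hℓ
      rw [hk]
      nlinarith
    exact_mod_cast h1
  have hnpos : 0 < n := by omega
  have hnr : (0 : ℝ) < n := by exact_mod_cast hnpos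
  have hN : (0 : ℝ) < (n : ℝ) ^ ℓ := by positivity
  -- a reference edge
  obtain ⟨U0, V0, hU0, hV0, h0⟩ : ∃ U0 V0 : Finset (ZMod n), U0.card = ℓ ∧ V0.card = ℓ ∧
      (U0 ∩ V0).card = ℓ - k := by
    obtain ⟨U, _, hU⟩ := exists_subset_card_eq (s := (univ : Finset (ZMod n))) (n := ℓ)
      (by rw [card_univ, ZMod.card]; omega)
    obtain ⟨T, hT, hTc⟩ := exists_subset_card_eq (s := U) (n := ℓ - k) (by omega)
    obtain ⟨R, hR, hRc⟩ := exists_subset_card_eq (s := Uᶜ) (n := k)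
      (by rw [card_compl, ZMod.card]; omega)
    have hdis : ∀ z ∈ R, z ∉ U := fun z hz => by simpa using hR hz
    refine ⟨U, T ∪ R, hU, ?_, ?_⟩
    · rw [card_union_of_disjoint]
      · omega
      · rw [disjoint_left]
        intro z hz hzR
        exact hdis z hzR (hT hz)
    · have : U ∩ (T ∪ R) = T := by
        ext z
        simp only [mem_inter, mem_union]
        constructor
        · rintro ⟨h1, h2 | h2⟩
          · exact h2
          · exact absurd h1 (hdis z h2)
        · intro h
          exact ⟨hT h, Or.inl h⟩
      rw [this, hTc]
  set a := ugE F U0 U0 with ha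
  set b := ugE F U0 V0 with hb
  set C : ℝ := (2 * (ℓ : ℝ) ^ 2 + ℓ) / (2 * n) with hC
  have hC0 : 0 ≤ C := by rw [hC]; positivity
  have hab : b ≤ a := ugE_le F U0 V0 (by omega)
  have ha0 : 0 ≤ a := ugE_nonneg F ℓ hF _ _ hU0 hU0
  set I : ℝ := ∑ x : Fin ℓ → ZMod n, if Function.Injective x then (1 : ℝ) else 0 with hI
  have hI0 : 0 ≤ I := sum_nonneg fun x _ => by split_ifs <;> norm_num
  have hI1 : I ≤ (n : ℝ) ^ ℓ := by
    calc I ≤ ∑ x : Fin ℓ → ZMod n, (1 : ℝ) := sum_le_sum fun x _ => by split_ifs <;> norm_num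
      _ = _ := by simp
  have hsq : ∑ x : Fin ℓ → ZMod n, G x ^ 2 = I * a := by
    have h := ug_sym F ℓ G hG ∅
    have hz : ∀ x y : Fin ℓ → ZMod n, ugZ ∅ x y = x := fun x y => by
      funext j; simp [ugZ]
    simp only [hz, sum_const, card_univ, nsmul_eq_mul, ← mul_sum] at h
    have h2 : (∑ x : Fin ℓ → ZMod n, if Function.Injective x then
        ((Fintype.card (Fin ℓ → ZMod n) : ℕ) : ℝ) * (if Function.Injective x then
          ugE F (univ.image x) (univ.image x) else 0) else 0) =
        ((Fintype.card (Fin ℓ → ZMod n) : ℕ) : ℝ) * (I * a) := by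
      rw [hI, sum_mul, mul_sum]
      refine sum_congr rfl fun x _ => ?_
      split_ifs with hx
      · rw [ugE_self_congr F (univ.image x) U0
          (by rw [card_image_of_injective _ hx, hU0]; simp)]
        ring
      · simp
    rw [h2] at h
    have hc : ((Fintype.card (Fin ℓ → ZMod n) : ℕ) : ℝ) ≠ 0 := by
      exact_mod_cast Fintype.card_ne_zero
    have h3 := mul_left_cancel₀ hc h
    rw [← h3]
    exact sum_congr rfl fun x _ => sq _
  have hpair : ∀ B : Finset (Fin ℓ), B.card = k → I * ((n : ℝ) ^ ℓ * (b - C * a)) ≤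
      ∑ x : Fin ℓ → ZMod n, ∑ y : Fin ℓ → ZMod n, G x * G (ugZ B x y) := by
    intro B hB
    rw [ug_sym F ℓ G hG B, hI, sum_mul]
    refine sum_le_sum fun x _ => ?_
    split_ifs with hx
    · rw [one_mul]
      have h := ug_inner F ℓ k hkl (by rw [ZMod.card]; exact hnpos) hF U0 V0 hU0 hV0 h0 C
        (by rw [ZMod.card]) B hB x hx
      rw [ZMod.card] at h
      exact h
    · simp
  have hch : (0 : ℝ) < (Nat.choose ℓ k : ℝ) := by exact_mod_cast Nat.choose_pos hkl.le
  have hop : I * (b - C * a) ≤ ∑ x : Fin ℓ → ZMod n, G x * ugACop n ℓ k G x := by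
    have e1 : ∑ x : Fin ℓ → ZMod n, G x * ugACop n ℓ k G x =
        (∑ B ∈ univ.filter (fun B : Finset (Fin ℓ) => B.card = k),
          ∑ x : Fin ℓ → ZMod n, ∑ y : Fin ℓ → ZMod n, G x * G (ugZ B x y)) /
          ((Nat.choose ℓ k : ℝ) * (n : ℝ) ^ ℓ) := by
      rw [sum_comm, sum_div]
      refine sum_congr rfl fun x _ => ?_
      unfold ugACop
      rw [mul_div_assoc', mul_sum]
      congr 1
      refine sum_congr rfl fun B _ => ?_
      rw [mul_sum]
      refine Fintype.sum_equiv (Equiv.addLeft x) _ _ fun y => ?_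
      congr 2
      funext j
      simp only [ugZ, Equiv.coe_addLeft, Pi.add_apply]
      split_ifs <;> simp
    rw [e1, le_div_iff₀ (by positivity)]
    have hcard : (univ.filter (fun B : Finset (Fin ℓ) => B.card = k)).card = Nat.choose ℓ k := by
      have : (univ.filter (fun B : Finset (Fin ℓ) => B.card = k)) = powersetCard k univ := by
        ext S
        simp [mem_powersetCard]
      rw [this, card_powersetCard, card_univ, Fintype.card_fin]
    calc I * (b - C * a) * ((Nat.choose ℓ k : ℝ) * (n : ℝ) ^ ℓ)
        = ∑ B ∈ univ.filter (fun B : Finset (Fin ℓ) => B.card = k),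
          I * ((n : ℝ) ^ ℓ * (b - C * a)) := by
          rw [sum_const, hcard, nsmul_eq_mul]; ring
      _ ≤ _ := sum_le_sum fun B hB => hpair B (by simpa using hB)
  rw [ug_lap_eq n ℓ k F U0 V0 hU0 hV0 h0, hsq, ← sub_div]
  have havg := ug_avg_ge n ℓ F hF U0 hU0
  have hD : 0 ≤ a - b + C * a := by
    have := mul_nonneg hC0 ha0
    linarith
  calc (I * a - ∑ x : Fin ℓ → ZMod n, G x * ugACop n ℓ k G x) / (n : ℝ) ^ ℓ
      ≤ a - b + C * a := by
        rw [div_le_iff₀ hN]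
        have := mul_le_mul_of_nonneg_right hI1 hD
        linarith
    _ ≤ _ := by
        have := mul_le_mul_of_nonneg_left havg hC0
        linarith
end

section
/- Let α ∈ (0,1) with αℓ ∈ ℕ, and let ℓ ≥ 1 and n ≥ 2ℓ be integers. Given F : V(J_{n,ℓ,α}) → [0,1], define G : [n]^ℓ → [0,1] by G(x₁,…,x_ℓ) = F({x₁,…,x_ℓ}) if the coordinates are pairwise distinct, and G(x) = 0 otherwise. Then for every integer j with 0 ≤ j ≤ ℓ−1: E_{Y ∈ [n]^j}[δ_Y(G)²] ≤ E_{Y'}[δ_{Y'}(F)²], where the left expectation is over a uniformly random tuple Y ∈ [n]^j with δ_Y(G) = E_{x ∈ [n]^{ℓ−j}}[G(Y,x)], and the right expectation is over a uniformly random j-element subset Y' of {1,…,n} with δ_{Y'}(F) equal to the average of F(S) over ℓ-element subsets S ⊇ Y'. -/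
open Finset

/-- Concatenation of a prefix tuple of length `r` with a suffix tuple of length `ℓ − r`. -/
def ugConcat {α : Type*} (ℓ r : ℕ) (A : Fin r → α) (x : Fin (ℓ - r) → α) : Fin ℓ → α :=
  fun j => if hj : (j : ℕ) < r then A ⟨(j : ℕ), hj⟩
    else x ⟨(j : ℕ) - r, by have h := j.isLt; omega⟩

/-- The restricted density on the cube: `δ_Y(G) = E_{x ∈ [n]^{ℓ−j}}[G(Y, x)]`. -/
noncomputable def ugDelta (n ℓ r : ℕ) [NeZero n] (G : (Fin ℓ → ZMod n) → ℝ)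
    (A : Fin r → ZMod n) : ℝ :=
  (∑ x : Fin (ℓ - r) → ZMod n, G (ugConcat ℓ r A x)) / (n : ℝ) ^ (ℓ - r)

/-- The restricted density on the Johnson graph: the average of `F(S)` over ℓ-element
sets `S ⊇ Y'`. -/
noncomputable def ugJDelta (n ℓ : ℕ) [NeZero n] (F : Finset (ZMod n) → ℝ)
    (Y : Finset (ZMod n)) : ℝ :=
  (∑ S ∈ univ.filter (fun S : Finset (ZMod n) => S.card = ℓ ∧ Y ⊆ S), F S)
    / (Nat.choose (n - Y.card) (ℓ - Y.card) : ℝ)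

lemma aux_card {β : Type*} [Fintype β] [DecidableEq β] (m : ℕ) (T : Finset β) (hT : T.card = m)
    (A : Finset (Fin m → β)) (hA : ∀ x ∈ A, Function.Injective x ∧ ∀ i, x i ∈ T) :
    A.card ≤ m.factorial := by
  classical
  have h1 : Fintype.card (Fin m ↪ T) = m.factorial := by
    rw [Fintype.card_embedding_eq, Fintype.card_coe, hT, Fintype.card_fin, Nat.descFactorial_self]
  have h2 : Fintype.card A ≤ Fintype.card (Fin m ↪ T) := by
    refine Fintype.card_le_of_injective
      (fun x : A => (⟨fun i => ⟨x.1 i, (hA x.1 x.2).2 i⟩, fun a b hab =>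
        (hA x.1 x.2).1 (Subtype.ext_iff.1 hab)⟩ : Fin m ↪ T)) ?_
    intro x y hxy
    apply Subtype.ext
    funext i
    have := congrArg (fun e : Fin m ↪ T => (e i : β)) hxy
    exact this
  rw [Fintype.card_coe] at h2
  omega

lemma aux_sum {ι κ : Type*} [DecidableEq κ] (A : Finset ι) (B : Finset κ) (φ : ι → κ)
    (hφ : ∀ x ∈ A, φ x ∈ B) (g : κ → ℝ) (hg : ∀ b ∈ B, 0 ≤ g b) (c : ℕ)
    (hc : ∀ b ∈ B, (A.filter (fun x => φ x = b)).card ≤ c) :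
    ∑ x ∈ A, g (φ x) ≤ c * ∑ b ∈ B, g b := by
  rw [← Finset.sum_fiberwise_of_maps_to hφ, Finset.mul_sum]
  refine Finset.sum_le_sum fun b hb => ?_
  rw [Finset.sum_congr rfl (g := fun _ => g b)
    (fun x hx => by rw [(Finset.mem_filter.1 hx).2]), Finset.sum_const, nsmul_eq_mul]
  exact mul_le_mul_of_nonneg_right (by exact_mod_cast hc b hb) (hg b hb)

lemma concat_left {β : Type*} (ℓ j : ℕ) (hj : j < ℓ) (Y : Fin j → β) (x : Fin (ℓ - j) → β)
    (i : Fin j) : ugConcat ℓ j Y x ⟨i, i.2.trans hj⟩ = Y i := by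
  simp [ugConcat]

lemma concat_right {β : Type*} (ℓ j : ℕ) (Y : Fin j → β) (x : Fin (ℓ - j) → β)
    (i : Fin (ℓ - j)) : ugConcat ℓ j Y x ⟨j + i, by omega⟩ = x i := by
  simp [ugConcat]

lemma desc_div_le (N n m : ℕ) (hN : N ≤ n) (hn : 0 < n) (hm : m ≤ N) (s : ℝ) (hs : 0 ≤ s) :
    (m.factorial * s) / (n : ℝ) ^ m ≤ s / (Nat.choose N m : ℝ) := by
  have hc : (0 : ℝ) < Nat.choose N m := by exact_mod_cast Nat.choose_pos hm
  have hp : (0 : ℝ) < (n : ℝ) ^ m := by positivity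
  have h : (m.factorial : ℝ) * Nat.choose N m ≤ (n : ℝ) ^ m := by
    rw [← Nat.cast_mul, ← Nat.descFactorial_eq_factorial_mul_choose]
    exact_mod_cast (Nat.descFactorial_le_pow N m).trans (Nat.pow_le_pow_left hN m)
  rw [div_le_div_iff₀ hp hc]
  nlinarith [mul_le_mul_of_nonneg_left h hs]

/-- the mean-square restricted densities of the cube lift `G` of `F` are
dominated by those of `F` on the Johnson graph. -/
theorem stmt16 (n ℓ k : ℕ) [NeZero n] (hℓ : 1 ≤ ℓ) (hn : 2 * ℓ ≤ n) (hk1 : 1 ≤ k)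
    (α : ℝ) (hα0 : 0 < α) (hα1 : α < 1) (hk : (k : ℝ) = α * ℓ)
    (F : Finset (ZMod n) → ℝ)
    (hF : ∀ S : Finset (ZMod n), S.card = ℓ → 0 ≤ F S ∧ F S ≤ 1)
    (G : (Fin ℓ → ZMod n) → ℝ)
    (hG : ∀ x : Fin ℓ → ZMod n,
      G x = if Function.Injective x then F (Finset.image x univ) else 0)
    (j : ℕ) (hj : j < ℓ) :
    (∑ Y : Fin j → ZMod n, (ugDelta n ℓ j G Y) ^ 2) / (n : ℝ) ^ j
      ≤ (∑ Y' ∈ univ.filter (fun Y' : Finset (ZMod n) => Y'.card = j),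
            (ugJDelta n ℓ F Y') ^ 2) / (Nat.choose n j : ℝ) := by
  have hn0 : 0 < n := by omega
  have hG0 : ∀ x, 0 ≤ G x := by
    intro x
    rw [hG]
    split_ifs with hx
    · exact (hF _ (by rw [Finset.card_image_of_injective _ hx]; simp)).1
    · exact le_rfl
  have hd0 : ∀ Y, 0 ≤ ugDelta n ℓ j G Y := fun Y =>
    div_nonneg (Finset.sum_nonneg fun x _ => hG0 _) (by positivity)
  -- non-injective tuples contribute zero
  have hz : ∀ Y : Fin j → ZMod n, ¬ Function.Injective Y → ugDelta n ℓ j G Y = 0 := by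
    intro Y hY
    unfold ugDelta
    rw [Finset.sum_eq_zero, zero_div]
    intro x _
    rw [hG, if_neg]
    intro hx
    apply hY
    intro a b hab
    rw [← concat_left ℓ j hj Y x a, ← concat_left ℓ j hj Y x b] at hab
    have := hx hab
    simp only [Fin.mk.injEq] at this
    exact Fin.ext this
  have hle : ∀ Y : Fin j → ZMod n, Function.Injective Y →
      ugDelta n ℓ j G Y ≤ ugJDelta n ℓ F (Finset.image Y univ) := by
    intro Y hY
    have hcard : (Finset.image Y univ).card = j := by
      rw [Finset.card_image_of_injective _ hY]; simp
    unfold ugDelta ugJDelta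
    rw [hcard]
    set B := univ.filter (fun S : Finset (ZMod n) => S.card = ℓ ∧ Finset.image Y univ ⊆ S) with hB
    have hB0 : ∀ S ∈ B, 0 ≤ F S := fun S hS => (hF S (Finset.mem_filter.1 hS).2.1).1
    refine le_trans ?_ (desc_div_le (n - j) n (ℓ - j) (by omega) hn0 (by omega) _
      (Finset.sum_nonneg hB0))
    gcongr
    have e : ∑ x : Fin (ℓ - j) → ZMod n, G (ugConcat ℓ j Y x)
        = ∑ x ∈ univ.filter (fun x : Fin (ℓ - j) → ZMod n =>
            Function.Injective (ugConcat ℓ j Y x)), F (Finset.image (ugConcat ℓ j Y x) univ) := by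
      rw [Finset.sum_filter]
      exact Finset.sum_congr rfl fun x _ => hG _
    rw [e]
    refine aux_sum _ B (fun x => Finset.image (ugConcat ℓ j Y x) univ) ?_ F hB0 _ ?_
    · intro x hx
      have hx := (Finset.mem_filter.1 hx).2
      rw [hB, Finset.mem_filter]
      refine ⟨mem_univ _, by rw [Finset.card_image_of_injective _ hx]; simp, ?_⟩
      intro y hy
      obtain ⟨i, -, rfl⟩ := Finset.mem_image.1 hy
      rw [← concat_left ℓ j hj Y x i]
      exact Finset.mem_image_of_mem _ (mem_univ _)
    · intro S hS
      obtain ⟨-, hS1, hS2⟩ := Finset.mem_filter.1 hS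
      refine aux_card (ℓ - j) (S \ Finset.image Y univ)
        (by rw [Finset.card_sdiff_of_subset hS2, hS1, hcard]) _ ?_
      intro x hx
      simp only [Finset.mem_filter, mem_univ, true_and] at hx
      obtain ⟨hx, hxS⟩ := hx
      constructor
      · intro a b hab
        rw [← concat_right ℓ j Y x a, ← concat_right ℓ j Y x b] at hab
        have := hx hab
        simp only [Fin.mk.injEq] at this
        exact Fin.ext (by omega)
      · intro i
        rw [Finset.mem_sdiff]
        constructor
        · rw [← hxS, ← concat_right ℓ j Y x i]
          exact Finset.mem_image_of_mem _ (mem_univ _)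
        · intro h
          obtain ⟨a, -, ha⟩ := Finset.mem_image.1 h
          rw [← concat_right ℓ j Y x i, ← concat_left ℓ j hj Y x a] at ha
          have := hx ha
          simp only [Fin.mk.injEq] at this
          omega
  refine le_trans ?_ (desc_div_le n n j le_rfl hn0 (by omega) _
    (Finset.sum_nonneg fun _ _ => sq_nonneg _))
  gcongr
  calc ∑ Y : Fin j → ZMod n, (ugDelta n ℓ j G Y) ^ 2
      = ∑ Y ∈ univ.filter (fun Y : Fin j → ZMod n => Function.Injective Y),
          (ugDelta n ℓ j G Y) ^ 2 := by
        rw [Finset.sum_filter]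
        refine Finset.sum_congr rfl fun Y _ => ?_
        split_ifs with h
        · rfl
        · rw [hz Y h]; norm_num
    _ ≤ ∑ Y ∈ univ.filter (fun Y : Fin j → ZMod n => Function.Injective Y),
          (ugJDelta n ℓ F (Finset.image Y univ)) ^ 2 := by
        refine Finset.sum_le_sum fun Y hY => ?_
        exact pow_le_pow_left₀ (hd0 Y) (hle Y (Finset.mem_filter.1 hY).2) 2
    _ ≤ _ := by
        refine aux_sum _ _ (fun Y : Fin j → ZMod n => Finset.image Y univ) ?_
          (fun Y' => (ugJDelta n ℓ F Y') ^ 2) (fun _ _ => sq_nonneg _) _ ?_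
        · intro Y hY
          have hY := (Finset.mem_filter.1 hY).2
          rw [Finset.mem_filter]
          exact ⟨mem_univ _, by rw [Finset.card_image_of_injective _ hY]; simp⟩
        · intro T hT
          refine aux_card j T (Finset.mem_filter.1 hT).2 _ ?_
          intro Y hY
          simp only [Finset.mem_filter, mem_univ, true_and] at hY
          refine ⟨hY.1, fun i => ?_⟩
          rw [← hY.2]
          exact Finset.mem_image_of_mem _ (mem_univ _)
end
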